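/- Let A be a countable abelian group and A₁ the intersection of the kernels of all homomorphisms A → ℤ. Then A₁ is a direct summand of A, and A/A₁ is free abelian. Equivalently: there is a free abelian subgroup A₂ ≤ A with A = A₁ ⊕ A₂ and Hom(A₁, ℤ) = 0. -/

import Mathlib

/-!
Call a module torsionless if its dual separates points, and write `N^⊥⊥` for the common kernel of
the functionals vanishing on a submodule `N`. Over a Noetherian ring, a functional on a torsionless
module `M` is determined on `N^⊥⊥` by its restriction to `N`, so `N^⊥⊥` embeds into the dual of a
submodule of the dual of `N`: it is finitely generated as soon as `N` is. If `b 0, b 1, …` generate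
`M`, the submodules `⟨b 0, …, b (n - 1)⟩^⊥⊥` therefore form a chain exhausting `M`, and its
successive quotients are finitely generated and torsionless, hence free over a principal ideal
domain. So `M` is free. Applied to the torsionless module `A ⧸ A₁`, this splits `A → A ⧸ A₁`; a
functional on the summand `A₁` extends to `A`, and functionals on `A` vanish on `A₁`.
-/

open Submodule

section Ring

variable {R M : Type*} [Ring R] [AddCommGroup M] [Module R M]

lemma exists_linearIndepOn_mkQ_sup_span_eq {p q : Submodule R M} (hpq : p ≤ q)
    (hfree : Module.Free R (q.map p.mkQ)) :
    ∃ t : Set M, LinearIndepOn R p.mkQ t ∧ p ⊔ span R t = q := by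
  let e := Module.Free.chooseBasis R (q.map p.mkQ)
  let v := (q.map p.mkQ).subtype ∘ e
  have hv_indep : LinearIndepOn R id (Set.range v) :=
    (e.linearIndependent.map' _ (ker_subtype _)).linearIndepOn_id
  have hv_span : span R (Set.range v) = q.map p.mkQ := by
    rw [Set.range_comp, span_image, e.span_eq, Submodule.map_top, range_subtype]
  obtain ⟨t, ht, ht_inj⟩ := Set.exists_image_eq_injOn_of_subset_range
    (p.mkQ_surjective.range_eq ▸ Set.subset_univ (Set.range v))
  refine ⟨t, (linearIndepOn_iff_image ht_inj).2 (ht ▸ hv_indep), ?_⟩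
  rw [← comap_map_mkQ, map_span, ht, hv_span, comap_map_mkQ, sup_eq_right.2 hpq]

theorem free_of_free_successive_quotients {N : ℕ → Submodule R M} (hN : Monotone N)
    (hN_zero : N 0 = ⊥) (hN_top : ⨆ n, N n = ⊤)
    (hN_free : ∀ n, Module.Free R ((N (n + 1)).map (N n).mkQ)) : Module.Free R M := by
  choose t ht_indep ht_span using fun n ↦
    exists_linearIndepOn_mkQ_sup_span_eq (hN (Nat.le_succ n)) (hN_free n)
  let s : ℕ → Set M := fun n ↦ ⋃ k < n, t k
  have hs_succ (n : ℕ) : s (n + 1) = s n ∪ t n := Set.biUnion_lt_succ t n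
  have hs_span (n : ℕ) : span R (s n) = N n := by
    induction n with
    | zero => simp [s, hN_zero]
    | succ n ih => rw [hs_succ, span_union, ih, ht_span]
  have hs_indep (n : ℕ) : LinearIndepOn R id (s n) := by
    induction n with
    | zero => simp [s]
    | succ n ih =>
      rw [hs_succ]
      exact ih.union_id_of_quotient (hs_span n ▸ subset_span) (ht_indep n)
  have hs_mono : Monotone s := monotone_nat_of_le_succ fun n ↦ by
    rw [hs_succ]; exact Set.subset_union_left
  have hs_iUnion_indep : LinearIndepOn R id (⋃ n, s n) :=
    linearIndepOn_iUnion_of_directed hs_mono.directed_le hs_indep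
  have hs_iUnion_span : span R (⋃ n, s n) = ⊤ := by
    simp only [span_iUnion, hs_span, hN_top]
  exact .of_basis <| .mk hs_iUnion_indep <|
    hs_iUnion_span.ge.trans (span_mono Subtype.range_coe.ge)

lemma exists_isCompl_of_projective_quotient (p : Submodule R M) [Module.Projective R (M ⧸ p)] :
    ∃ q, IsCompl p q := by
  obtain ⟨j, hj⟩ := Module.projective_lifting_property p.mkQ LinearMap.id p.mkQ_surjective
  have hidem : IsIdempotentElem (j ∘ₗ p.mkQ) := by
    ext x
    exact congrArg j (LinearMap.congr_fun hj (p.mkQ x))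
  have hker : LinearMap.ker (j ∘ₗ p.mkQ) = p := by
    rw [LinearMap.ker_comp_of_ker_eq_bot _ (LinearMap.ker_eq_bot_of_inverse hj), ker_mkQ]
  exact ⟨_, hker ▸ (LinearMap.IsIdempotentElem.isCompl hidem).symm⟩

lemma linearMap_eq_zero_of_isCompl {M' : Type*} [AddCommGroup M'] [Module R M']
    {p q : Submodule R M} (hpq : IsCompl p q) (hp : ∀ φ : M →ₗ[R] M', p ≤ LinearMap.ker φ)
    (ψ : p →ₗ[R] M') : ψ = 0 := by
  ext x
  simpa using hp (ψ ∘ₗ p.projectionOnto q hpq) x.2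

end Ring

/-- A module is torsionless if linear functionals separate its points, that is, if the canonical
map to its double dual is injective. -/
def IsTorsionless (R M : Type*) [CommRing R] [AddCommGroup M] [Module R M] : Prop :=
  Function.Injective (Module.Dual.eval R M)

section CommRing

variable {R M : Type*} [CommRing R] [AddCommGroup M] [Module R M]

lemma isTorsionless_quotient_dualCoannihilator (Φ : Submodule R (Module.Dual R M)) :
    IsTorsionless R (M ⧸ Φ.dualCoannihilator) := by
  refine (injective_iff_map_eq_zero _).2 fun y hy ↦ ?_
  obtain ⟨x, rfl⟩ := mkQ_surjective _ y
  refine (Quotient.mk_eq_zero _).2 ((mem_dualCoannihilator x).2 fun φ hφ ↦ ?_)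
  have hφ_le : Φ.dualCoannihilator ≤ LinearMap.ker φ :=
    fun z hz ↦ (mem_dualCoannihilator z).1 hz φ hφ
  exact LinearMap.congr_fun hy (Φ.dualCoannihilator.liftQ φ hφ_le)

namespace IsTorsionless

variable (hM : IsTorsionless R M)
include hM

lemma isTorsionFree : Module.IsTorsionFree R M :=
  hM.moduleIsTorsionFree _ fun r x ↦ map_smul _ r x

lemma dualCoannihilator_top : (⊤ : Submodule R (Module.Dual R M)).dualCoannihilator = ⊥ := by
  refine (Submodule.eq_bot_iff _).2 fun x hx ↦ (injective_iff_map_eq_zero _).1 hM x ?_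
  ext φ
  exact (mem_dualCoannihilator x).1 hx φ mem_top

lemma injective_dualPairing_flip (N : Submodule R M) :
    Function.Injective N.dualPairing.flip :=
  fun _ _ hxy ↦ Subtype.ext <| hM <| LinearMap.ext fun φ ↦
    LinearMap.congr_fun hxy (Submodule.Quotient.mk φ)

lemma fg_dualAnnihilator_dualCoannihilator [IsNoetherianRing R] {N : Submodule R M} (hN : N.FG) :
    N.dualAnnihilator.dualCoannihilator.FG := by
  have : Module.Finite R N := .of_fg hN
  have : Module.Finite R (Module.Dual R M ⧸ N.dualAnnihilator) :=
    .equiv N.dualRestrict.quotKerEquivRange.symm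
  set P := N.dualAnnihilator.dualCoannihilator
  have : Module.Finite R (Module.Dual R M ⧸ P.dualAnnihilator) := by
    rwa [dualAnnihilator_dualCoannihilator_dualAnnihilator]
  exact Module.Finite.iff_fg.1 (.of_injective _ (hM.injective_dualPairing_flip P))

variable [IsDomain R] [IsPrincipalIdealRing R]

lemma free_of_fg {N : Submodule R M} (hN : N.FG) : Module.Free R N := by
  have := hM.isTorsionFree
  have : Module.Finite R N := .of_fg hN
  infer_instance

theorem free (hcount : ∃ s : Set M, s.Countable ∧ span R s = ⊤) : Module.Free R M := by
  obtain ⟨s, hs, hs_span⟩ := hcount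
  obtain ⟨b, hb⟩ := (hs.insert 0).exists_eq_range (Set.insert_nonempty 0 s)
  let N : ℕ → Submodule R M := fun n ↦
    (span R (b '' Set.Iio n)).dualAnnihilator.dualCoannihilator
  have hN : Monotone N := fun m n hmn ↦ dualCoannihilator_anti <| dualAnnihilator_anti <|
    span_mono <| Set.image_mono <| Set.Iio_subset_Iio hmn
  have hN_fg (n : ℕ) : (N n).FG := hM.fg_dualAnnihilator_dualCoannihilator <|
    fg_span ((Set.finite_Iio n).image b)
  have hN_zero : N 0 = ⊥ := by
    simp [N, hM.dualCoannihilator_top]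
  have hb_mem (n : ℕ) : b n ∈ N (n + 1) := le_dualAnnihilator_dualCoannihilator _ <|
    subset_span <| Set.mem_image_of_mem b <| Set.mem_Iio.2 <| Nat.lt_succ_self n
  have hN_top : ⨆ n, N n = ⊤ := by
    rw [eq_top_iff, ← hs_span, ← span_insert_zero, hb, span_le]
    rintro _ ⟨n, rfl⟩
    exact le_iSup N (n + 1) (hb_mem n)
  exact free_of_free_successive_quotients hN hN_zero hN_top fun n ↦
    (isTorsionless_quotient_dualCoannihilator _).free_of_fg ((hN_fg (n + 1)).map _)

end IsTorsionless

theorem stmt_6_general [IsDomain R] [IsPrincipalIdealRing R]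
    (hM : ∃ s : Set M, s.Countable ∧ span R s = ⊤)
    (M₁ : Submodule R M) (hM₁ : M₁ = ⨅ φ : Module.Dual R M, LinearMap.ker φ) :
    ∃ M₂ : Submodule R M, IsCompl M₁ M₂ ∧ Module.Free R M₂ ∧
      ∀ ψ : Module.Dual R M₁, ψ = 0 := by
  have hM₁_eq : M₁ = (⊤ : Submodule R (Module.Dual R M)).dualCoannihilator := by
    ext x
    simp [hM₁, mem_dualCoannihilator]
  have htorsionless : IsTorsionless R (M ⧸ M₁) :=
    hM₁_eq ▸ isTorsionless_quotient_dualCoannihilator ⊤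
  obtain ⟨s, hs_countable, hs_span⟩ := hM
  have hs_span_quotient : span R (M₁.mkQ '' s) = ⊤ := by
    rw [span_image, hs_span, Submodule.map_top, range_mkQ]
  have : Module.Free R (M ⧸ M₁) :=
    htorsionless.free ⟨M₁.mkQ '' s, hs_countable.image _, hs_span_quotient⟩
  obtain ⟨M₂, hcompl⟩ := exists_isCompl_of_projective_quotient M₁
  exact ⟨M₂, hcompl, .of_equiv (quotientEquivOfIsCompl M₁ M₂ hcompl),
    linearMap_eq_zero_of_isCompl hcompl fun φ ↦ hM₁ ▸ iInf_le _ φ⟩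

end CommRing

lemma toIntSubmodule_iInf_ker (A B : Type*) [AddCommGroup A] [AddCommGroup B] :
    AddSubgroup.toIntSubmodule (⨅ φ : A →+ B, φ.ker) = ⨅ φ : A →ₗ[ℤ] B, LinearMap.ker φ := by
  rw [OrderIso.map_iInf]
  exact (addMonoidHomLequivInt ℤ).toEquiv.iInf_congr fun _ ↦ rfl

/-- For a countable abelian group A, let A₁ be the intersection of the kernels of
all homomorphisms A → ℤ. Then A₁ is a direct summand of A with a free abelian
complement A₂, and Hom(A₁, ℤ) = 0. -/
theorem stmt_6 {A : Type*} [AddCommGroup A] [Countable A]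
    (A₁ : AddSubgroup A) (hA₁ : A₁ = ⨅ (φ : A →+ ℤ), φ.ker) :
    ∃ A₂ : AddSubgroup A, IsCompl A₁ A₂ ∧ Module.Free ℤ A₂ ∧
      ∀ ψ : A₁ →+ ℤ, ψ = 0 := by
  obtain ⟨A₂, hcompl, hfree, hdual⟩ :=
    stmt_6_general ⟨Set.univ, Set.countable_univ, span_univ⟩ A₁.toIntSubmodule
      (hA₁ ▸ toIntSubmodule_iInf_ker A ℤ)
  exact ⟨A₂.toAddSubgroup, AddSubgroup.toIntSubmodule.symm.isCompl hcompl, hfree,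
    fun ψ ↦ AddMonoidHom.toIntLinearMap_injective (hdual ψ.toIntLinearMap)⟩
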